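/- Let n ≥ 5 and 2 ≤ k ≤ n−2 be integers. The union of the D_n-orbits of the checkboard collection and the dual checkboard collection has exactly n elements: |{ ρ·C^ch_{k,n} : ρ ∈ D_n } ∪ { ρ·Ĉ^ch_{k,n} : ρ ∈ D_n }| = n. -/

import Mathlib

open Finset

/-- `(a,b,c,d)` is strictly cyclically ordered in `ℤ/nℤ`. -/
def StrictCyclicOrd {n : ℕ} (a b c d : ZMod n) : Prop :=
  0 < (b - a).val ∧ (b - a).val < (c - a).val ∧ (c - a).val < (d - a).val

/-- `I` and `J` are weakly separated subsets of `ℤ/nℤ`. -/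
def WeaklySep {n : ℕ} (I J : Finset (ZMod n)) : Prop :=
  ¬ ∃ a c b d : ZMod n, a ∈ I \ J ∧ c ∈ I \ J ∧ b ∈ J \ I ∧ d ∈ J \ I ∧
      StrictCyclicOrd a b c d

/-- The dihedral group `D_n`, realized as the subgroup of permutations of `ℤ/nℤ`
generated by `σ : i ↦ i + 1` and `τ : i ↦ 2 - i`. -/
def dihedral (n : ℕ) : Subgroup (Equiv.Perm (ZMod n)) :=
  Subgroup.closure {Equiv.addRight (1 : ZMod n), Equiv.subLeft (2 : ZMod n)}

/-- The set `[m] = {1, …, m} ⊆ ℤ/nℤ` (with `[0] = ∅`). -/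
def seg (n m : ℕ) : Finset (ZMod n) := (Finset.Icc 1 m).image (fun t : ℕ => (t : ZMod n))

/-- Rectangle label `I^rec_{i,j} = ([i+j]∖[i]) ∪ ([n]∖[n−k+j])`. -/
def Irec (k n i j : ℕ) : Finset (ZMod n) :=
  (seg n (i + j) \ seg n i) ∪ (seg n n \ seg n (n - k + j))

/-- Checkboard label `I^ch_{i,j} = σ^{−⌈(i+j)/2⌉} I^rec_{i,j}`. -/
def Ich (k n i j : ℕ) : Finset (ZMod n) :=
  (Irec k n i j).image (fun x => x - (((i + j + 1) / 2 : ℕ) : ZMod n))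

/-- Dual rectangle label `Î^rec_{i,j} = [i] ∪ ([k+j]∖[i+j])`. -/
def Drec (k n i j : ℕ) : Finset (ZMod n) :=
  seg n i ∪ (seg n (k + j) \ seg n (i + j))

/-- Dual checkboard label `Î^ch_{i,j} = σ^{−⌈(i+j)/2⌉} Î^rec_{i,j}`. -/
def Dch (k n i j : ℕ) : Finset (ZMod n) :=
  (Drec k n i j).image (fun x => x - (((i + j + 1) / 2 : ℕ) : ZMod n))

/-- The rectangle collection `C^rec_{k,n}`. -/
def Crec (k n : ℕ) : Finset (Finset (ZMod n)) :=
  ((Finset.range (n - k + 1)) ×ˢ (Finset.range (k + 1))).image (fun p => Irec k n p.1 p.2)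

/-- The checkboard collection `C^ch_{k,n}`. -/
def Cch (k n : ℕ) : Finset (Finset (ZMod n)) :=
  ((Finset.range (n - k + 1)) ×ˢ (Finset.range (k + 1))).image (fun p => Ich k n p.1 p.2)

/-- The dual rectangle collection `Ĉ^rec_{k,n}`. -/
def CDrec (k n : ℕ) : Finset (Finset (ZMod n)) :=
  ((Finset.range (k + 1)) ×ˢ (Finset.range (n - k + 1))).image (fun p => Drec k n p.1 p.2)

/-- The dual checkboard collection `Ĉ^ch_{k,n}`. -/
def CDch (k n : ℕ) : Finset (Finset (ZMod n)) :=
  ((Finset.range (k + 1)) ×ˢ (Finset.range (n - k + 1))).image (fun p => Dch k n p.1 p.2)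

/-- `C` is a weakly separated collection of `k`-subsets of `ℤ/nℤ`. -/
def IsWSColl (n k : ℕ) (C : Set (Finset (ZMod n))) : Prop :=
  (∀ I ∈ C, I.card = k) ∧ ∀ I ∈ C, ∀ J ∈ C, WeaklySep I J

/-- `C` is a maximal weakly separated collection of `k`-subsets of `ℤ/nℤ`. -/
def IsMaxWSColl (n k : ℕ) (C : Set (Finset (ZMod n))) : Prop :=
  IsWSColl n k C ∧ ∀ C' : Set (Finset (ZMod n)), IsWSColl n k C' → C ⊆ C' → C' = C

/-!
A checkboard label is, up to rotation, a union of two cyclic arcs `(a₁, b₁] ∪ (a₂, b₂]` of total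
length `k`. The rotation `σ^{-⌈(i+j)/2⌉}` normalises `b₁ + b₂` modulo `n` up to an error of one:
`C^ch` consists of the labels with `b₁ + b₂ ∈ {0, -1}` and `Ĉ^ch` of those with
`b₁ + b₂ ∈ {k, k - 1}`. Let `X t` be the collection with `b₁ + b₂ ∈ {t, t - 1}`, for `t ∈ ℤ/nℤ`.
Then `σ` maps `X t` to `X (t + 2)` and `τ` maps `X t` to `X (k + 3 - t)`, so the orbits of
`C^ch = X 0` and `Ĉ^ch = X k` lie among the `X t`; the rotates of `X 0` and of `τ (X k) = X 3`
already exhaust them. Finally the `X t` are pairwise distinct: if both arcs and both gaps of `I` are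
nonempty, then `b₁` and `b₂` are the two `x ∈ I` with `x + 1 ∉ I`, so `I` determines `b₁ + b₂`, and
for `n ≥ 5` every residue is the sum of such an `I`. Hence `X t` determines `{t, t - 1}`, and so
`t`.
-/

section Checkboard

open scoped Pointwise

variable {n k : ℕ}

/-! ### Cyclic arcs -/

/-- The cyclic arc `(p, q]`, given by integer representatives of its end points. -/
noncomputable def arc (n : ℕ) (p q : ℤ) : Finset (ZMod n) :=
  (Ioc p q).image Int.cast

lemma injOn_intCast_Ioc (w : ℤ) : Set.InjOn (Int.cast : ℤ → ZMod n) (Ioc w (w + n)) := by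
  intro x hx y hy hxy
  simp only [coe_Ioc, Set.mem_Ioc] at hx hy
  have hdvd : (n : ℤ) ∣ y - x := (ZMod.intCast_eq_intCast_iff_dvd_sub x y n).1 hxy
  have habs : |y - x| < n := abs_lt.2 ⟨by omega, by omega⟩
  have := Int.eq_zero_of_abs_lt_dvd hdvd habs
  omega

lemma intCast_mem_arc_iff {w p q x : ℤ} (hp : w ≤ p) (hq : q ≤ w + n) (hwx : w < x)
    (hxw : x ≤ w + n) : (x : ZMod n) ∈ arc n p q ↔ p < x ∧ x ≤ q := by
  have hsub : (Ioc p q : Set ℤ) ⊆ Ioc w (w + n) := coe_subset.2 (Ioc_subset_Ioc hp hq)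
  rw [← mem_Ioc, ← mem_coe, arc, coe_image]
  exact (injOn_intCast_Ioc w).mem_image_iff hsub (mem_coe.2 (mem_Ioc.2 ⟨hwx, hxw⟩))

lemma arc_sdiff_arc {p q r : ℤ} (hpq : p ≤ q) (hqr : q ≤ r) (hr : r ≤ p + n) :
    arc n p r \ arc n p q = arc n q r := by
  have hinj : Set.InjOn (Int.cast : ℤ → ZMod n) (Ioc p r) :=
    (injOn_intCast_Ioc p).mono (coe_subset.2 (Ioc_subset_Ioc_right hr))
  rw [arc, arc, ← image_sdiff_of_injOn hinj (Ioc_subset_Ioc_right hqr), arc]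
  congr 1
  ext x
  simp only [mem_sdiff, mem_Ioc]
  omega

lemma addRight_smul_arc (r p q : ℤ) :
    Equiv.addRight (r : ZMod n) • arc n p q = arc n (p + r) (q + r) := by
  ext y
  simp only [arc, mem_smul_finset, mem_image, mem_Ioc, Equiv.Perm.smul_def, Equiv.coe_addRight]
  constructor
  · rintro ⟨_, ⟨x, hx, rfl⟩, rfl⟩
    exact ⟨x + r, by omega, by push_cast; rfl⟩
  · rintro ⟨x, hx, rfl⟩
    exact ⟨_, ⟨x - r, by omega, rfl⟩, by push_cast; ring⟩

lemma subLeft_smul_arc (r p q : ℤ) :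
    Equiv.subLeft (r : ZMod n) • arc n p q = arc n (r - 1 - q) (r - 1 - p) := by
  ext y
  simp only [arc, mem_smul_finset, mem_image, mem_Ioc, Equiv.Perm.smul_def, Equiv.subLeft_apply]
  constructor
  · rintro ⟨_, ⟨x, hx, rfl⟩, rfl⟩
    exact ⟨r - x, by omega, by push_cast; rfl⟩
  · rintro ⟨x, hx, rfl⟩
    exact ⟨_, ⟨r - x, by omega, rfl⟩, by push_cast; ring⟩

lemma arc_add_mul_natCast (p q m : ℤ) : arc n (p + n * m) (q + n * m) = arc n p q := by
  rw [← addRight_smul_arc]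
  simp

lemma arc_add_natCast (p q : ℤ) : arc n (p + n) (q + n) = arc n p q := by
  simpa using arc_add_mul_natCast p q 1

/-! ### Labels as unions of two arcs -/

lemma seg_eq_arc (n m : ℕ) : seg n m = arc n 0 m := by
  ext y
  simp only [seg, arc, mem_image, mem_Icc, mem_Ioc]
  constructor
  · rintro ⟨x, hx, rfl⟩
    exact ⟨x, by omega, Int.cast_natCast x⟩
  · rintro ⟨x, hx, rfl⟩
    lift x to ℕ using hx.1.le
    exact ⟨x, by omega, (Int.cast_natCast x).symm⟩

lemma seg_sdiff_seg {a b : ℕ} (hab : a ≤ b) (hb : b ≤ n) : seg n b \ seg n a = arc n a b := by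
  rw [seg_eq_arc, seg_eq_arc, arc_sdiff_arc (by omega) (by omega) (by omega)]

lemma image_sub_natCast_eq_smul (I : Finset (ZMod n)) (c : ℕ) :
    I.image (fun x ↦ x - (c : ZMod n)) = Equiv.addRight ((-c : ℤ) : ZMod n) • I := by
  refine image_congr fun x _ ↦ ?_
  simp [sub_eq_add_neg]

lemma Ich_eq_arc_union_arc {i j : ℕ} (hk : k ≤ n) (hi : i ≤ n - k) (hj : j ≤ k) {c : ℤ}
    (hc : c = ((i + j + 1) / 2 : ℕ)) :
    Ich k n i j = arc n (i - c) (i + j - c) ∪ arc n (n - k + j - c) (n - c) := by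
  rw [Ich, Irec, seg_sdiff_seg (by omega) (by omega), seg_sdiff_seg (by omega) le_rfl,
    image_sub_natCast_eq_smul, smul_finset_union, addRight_smul_arc, addRight_smul_arc, hc]
  push_cast [hk]
  rfl

lemma Dch_eq_arc_union_arc {i j : ℕ} (hi : i ≤ k) (hkj : k + j ≤ n) {c : ℤ}
    (hc : c = ((i + j + 1) / 2 : ℕ)) :
    Dch k n i j = arc n (-c) (i - c) ∪ arc n (i + j - c) (k + j - c) := by
  rw [Dch, Drec, seg_sdiff_seg (by omega) hkj, seg_eq_arc,
    image_sub_natCast_eq_smul, smul_finset_union, addRight_smul_arc, addRight_smul_arc, hc,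
    zero_add]
  push_cast
  rfl

/-! ### Exits -/

/-- The elements of `I` at which walking around the circle leaves `I`; for a union of separated
arcs these are the end points of the arcs. -/
def exits (I : Finset (ZMod n)) : Finset (ZMod n) :=
  {x ∈ I | x + 1 ∉ I}

lemma exits_union_subset (I J : Finset (ZMod n)) : exits (I ∪ J) ⊆ exits I ∪ exits J := by
  intro x
  simp only [exits, mem_filter, mem_union]
  tauto

lemma exits_arc_subset (p q : ℤ) : exits (arc n p q) ⊆ {(q : ZMod n)} := by
  intro y hy
  obtain ⟨hmem, hexit⟩ := mem_filter.1 hy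
  simp only [arc, mem_image, mem_Ioc] at hmem hexit
  obtain ⟨x, hx, rfl⟩ := hmem
  obtain rfl | hxq := eq_or_ne x q
  · exact mem_singleton_self _
  · exact absurd ⟨x + 1, by omega, by push_cast; rfl⟩ hexit

/-! ### Pairs of arcs -/

/-- Two arcs `(a₁, b₁]` and `(a₂, b₂]`, possibly empty or adjacent, of total length `k`, met in this
order on one turn around `ℤ/nℤ`. The end points are integers, so the same subset of `ℤ/nℤ` has many
such presentations. -/
structure ArcPair (n k : ℕ) where
  a₁ : ℤ
  b₁ : ℤ
  a₂ : ℤ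
  b₂ : ℤ
  a₁_le_b₁ : a₁ ≤ b₁
  b₁_le_a₂ : b₁ ≤ a₂
  a₂_le_b₂ : a₂ ≤ b₂
  b₂_le : b₂ ≤ a₁ + n
  length_eq : (b₁ - a₁) + (b₂ - a₂) = k

namespace ArcPair

/-- The subset of `ℤ/nℤ` covered by the two arcs. -/
noncomputable def toFinset (A : ArcPair n k) : Finset (ZMod n) :=
  arc n A.a₁ A.b₁ ∪ arc n A.a₂ A.b₂

/-- The invariant `b₁ + b₂` separating the dihedral translates of the checkboard collections. -/
def endSum (A : ArcPair n k) : ℤ :=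
  A.b₁ + A.b₂

/-- The image of a pair of arcs under `x ↦ x + r`. -/
def translate (A : ArcPair n k) (r : ℤ) : ArcPair n k where
  a₁ := A.a₁ + r
  b₁ := A.b₁ + r
  a₂ := A.a₂ + r
  b₂ := A.b₂ + r
  a₁_le_b₁ := by linarith [A.a₁_le_b₁]
  b₁_le_a₂ := by linarith [A.b₁_le_a₂]
  a₂_le_b₂ := by linarith [A.a₂_le_b₂]
  b₂_le := by linarith [A.b₂_le]
  length_eq := by linarith [A.length_eq]

/-- The image of a pair of arcs under `x ↦ r - x`, with the arcs listed in increasing order. -/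
def reflect (A : ArcPair n k) (r : ℤ) : ArcPair n k where
  a₁ := r - 1 - A.b₂
  b₁ := r - 1 - A.a₂
  a₂ := r - 1 - A.b₁
  b₂ := r - 1 - A.a₁
  a₁_le_b₁ := by linarith [A.a₂_le_b₂]
  b₁_le_a₂ := by linarith [A.b₁_le_a₂]
  a₂_le_b₂ := by linarith [A.a₁_le_b₁]
  b₂_le := by linarith [A.b₂_le]
  length_eq := by linarith [A.length_eq]

/-- The same two arcs, read off starting from the second one. -/
def swap (A : ArcPair n k) : ArcPair n k where
  a₁ := A.a₂
  b₁ := A.b₂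
  a₂ := A.a₁ + n
  b₂ := A.b₁ + n
  a₁_le_b₁ := A.a₂_le_b₂
  b₁_le_a₂ := A.b₂_le
  a₂_le_b₂ := by linarith [A.a₁_le_b₁]
  b₂_le := by linarith [A.b₁_le_a₂]
  length_eq := by linarith [A.length_eq]

lemma toFinset_translate (A : ArcPair n k) (r : ℤ) :
    (A.translate r).toFinset = Equiv.addRight (r : ZMod n) • A.toFinset := by
  simp only [toFinset, translate, smul_finset_union, addRight_smul_arc]

lemma toFinset_reflect (A : ArcPair n k) (r : ℤ) :
    (A.reflect r).toFinset = Equiv.subLeft (r : ZMod n) • A.toFinset := by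
  simp only [toFinset, reflect, smul_finset_union, subLeft_smul_arc, union_comm]

lemma toFinset_swap (A : ArcPair n k) : A.swap.toFinset = A.toFinset := by
  simp only [toFinset, swap, arc_add_natCast, union_comm]

lemma endSum_translate (A : ArcPair n k) (r : ℤ) : (A.translate r).endSum = A.endSum + 2 * r := by
  simp only [endSum, translate]
  ring

lemma endSum_reflect (A : ArcPair n k) (r : ℤ) :
    (A.reflect r).endSum = k - A.endSum + 2 * (r - 1) := by
  simp only [endSum, reflect]
  linarith [A.length_eq]

lemma endSum_swap (A : ArcPair n k) : A.swap.endSum = A.endSum + n := by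
  simp only [endSum, swap]
  ring

lemma exists_endSum_eq_of_intCast_eq (A : ArcPair n k) {s : ℤ} (h : (A.endSum : ZMod n) = s) :
    ∃ B : ArcPair n k, B.toFinset = A.toFinset ∧ B.endSum = s := by
  obtain ⟨m, hm⟩ := (ZMod.intCast_eq_intCast_iff_dvd_sub _ _ _).1 h
  have toFinset_translate_mul (u : ℤ) : (A.translate (n * u)).toFinset = A.toFinset := by
    simp only [toFinset, translate, arc_add_mul_natCast]
  obtain ⟨u, rfl | rfl⟩ := Int.even_or_odd' m
  · refine ⟨A.translate (n * u), toFinset_translate_mul u, ?_⟩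
    rw [endSum_translate]
    linarith
  · refine ⟨(A.translate (n * u)).swap, by rw [toFinset_swap, toFinset_translate_mul], ?_⟩
    rw [endSum_swap, endSum_translate]
    linarith

/-- Both arcs and both gaps between them are nonempty. -/
structure IsProper (A : ArcPair n k) : Prop where
  a₁_lt_b₁ : A.a₁ < A.b₁
  b₁_lt_a₂ : A.b₁ < A.a₂
  a₂_lt_b₂ : A.a₂ < A.b₂
  b₂_lt : A.b₂ < A.a₁ + n

lemma exits_toFinset_subset (A : ArcPair n k) :
    exits A.toFinset ⊆ {(A.b₁ : ZMod n), (A.b₂ : ZMod n)} :=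
  (exits_union_subset _ _).trans (union_subset_union (exits_arc_subset _ _) (exits_arc_subset _ _))

lemma intCast_mem_toFinset_iff (A : ArcPair n k) {x : ℤ} (hax : A.a₁ < x) (hxa : x ≤ A.a₁ + n) :
    (x : ZMod n) ∈ A.toFinset ↔ x ≤ A.b₁ ∨ A.a₂ < x ∧ x ≤ A.b₂ := by
  have hb₁ : A.b₁ ≤ A.a₁ + n := A.b₁_le_a₂.trans (A.a₂_le_b₂.trans A.b₂_le)
  have ha₂ : A.a₁ ≤ A.a₂ := A.a₁_le_b₁.trans A.b₁_le_a₂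
  rw [toFinset, mem_union, intCast_mem_arc_iff le_rfl hb₁ hax hxa,
    intCast_mem_arc_iff ha₂ A.b₂_le hax hxa, and_iff_right hax]

lemma IsProper.exits_toFinset {A : ArcPair n k} (hA : A.IsProper) :
    exits A.toFinset = {(A.b₁ : ZMod n), (A.b₂ : ZMod n)} := by
  refine A.exits_toFinset_subset.antisymm ?_
  have intCast_mem_exits {x : ℤ} (hax : A.a₁ < x) (hxa : x < A.a₁ + n) :
      (x : ZMod n) ∈ exits A.toFinset ↔
        (x ≤ A.b₁ ∨ A.a₂ < x ∧ x ≤ A.b₂) ∧ ¬(x + 1 ≤ A.b₁ ∨ A.a₂ < x + 1 ∧ x + 1 ≤ A.b₂) := by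
    rw [exits, mem_filter, A.intCast_mem_toFinset_iff hax hxa.le, ← Int.cast_one, ← Int.cast_add,
      A.intCast_mem_toFinset_iff (by omega) (by omega)]
  obtain ⟨h₁, h₂, h₃, h₄⟩ := hA
  rw [insert_subset_iff, singleton_subset_iff, intCast_mem_exits (by omega) (by omega),
    intCast_mem_exits (by omega) (by omega)]
  omega

lemma IsProper.intCast_b₁_ne_intCast_b₂ {A : ArcPair n k} (hA : A.IsProper) :
    (A.b₁ : ZMod n) ≠ A.b₂ := by
  obtain ⟨h₁, h₂, h₃, h₄⟩ := hA
  refine (injOn_intCast_Ioc A.a₁).ne ?_ ?_ (by omega) <;>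
  · simp only [coe_Ioc, Set.mem_Ioc]
    omega

lemma IsProper.intCast_endSum_eq {A B : ArcPair n k} (hA : A.IsProper)
    (h : A.toFinset = B.toFinset) : (A.endSum : ZMod n) = B.endSum := by
  have hsub := B.exits_toFinset_subset
  rw [← h, hA.exits_toFinset] at hsub
  have hne := hA.intCast_b₁_ne_intCast_b₂
  simp only [insert_subset_iff, singleton_subset_iff, mem_insert, mem_singleton] at hsub
  simp only [endSum, Int.cast_add]
  obtain ⟨h₁ | h₁, h₂ | h₂⟩ := hsub
  · exact absurd (h₁.trans h₂.symm) hne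
  · rw [h₁, h₂]
  · rw [h₁, h₂, add_comm]
  · exact absurd (h₁.trans h₂.symm) hne

lemma exists_isProper_endSum_eq (hn : 5 ≤ n) (hk : 2 ≤ k) (hkn : k + 2 ≤ n) (s : ℤ) :
    ∃ A : ArcPair n k, A.IsProper ∧ A.endSum = s := by
  obtain ⟨l, g, hl, hlk, hg, hgk, hparity⟩ :
      ∃ l g : ℤ, 0 < l ∧ l < k ∧ 0 < g ∧ g < n - k ∧ Even (s - k - l - g) := by
    obtain hs | hs := Int.even_or_odd (s - k)
    · exact ⟨1, 1, by omega, by omega, by omega, by omega, by grind⟩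
    · obtain h | h : 3 ≤ k ∨ 3 ≤ n - k := by omega
      · exact ⟨2, 1, by omega, by omega, by omega, by omega, by grind⟩
      · exact ⟨1, 2, by omega, by omega, by omega, by omega, by grind⟩
  obtain ⟨a, ha⟩ := hparity
  refine ⟨⟨a, a + l, a + l + g, a + g + k, by omega, by omega, by omega, by omega, by omega⟩,
    by constructor <;> dsimp only <;> omega, ?_⟩
  dsimp only [endSum]
  omega

end ArcPair

/-! ### The family of checkboard collections -/

open Classical in
/-- The collection `X t` of all unions of two arcs of total length `k` whose ends add up to `t` or
`t - 1` modulo `n`. -/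
noncomputable def checkboardFamily (n k : ℕ) [NeZero n] (t : ZMod n) : Finset (Finset (ZMod n)) :=
  {I | ∃ A : ArcPair n k, A.toFinset = I ∧ ((A.endSum : ZMod n) = t ∨ (A.endSum : ZMod n) = t - 1)}

section NeZero

variable [NeZero n]

lemma mem_checkboardFamily {t : ZMod n} {I : Finset (ZMod n)} :
    I ∈ checkboardFamily n k t ↔ ∃ A : ArcPair n k, A.toFinset = I ∧
      ((A.endSum : ZMod n) = t ∨ (A.endSum : ZMod n) = t - 1) := by
  simp [checkboardFamily]

lemma mem_checkboardFamily_intCast {s : ℤ} {I : Finset (ZMod n)} :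
    I ∈ checkboardFamily n k s ↔
      ∃ A : ArcPair n k, A.toFinset = I ∧ (A.endSum = s ∨ A.endSum = s - 1) := by
  rw [mem_checkboardFamily]
  constructor
  · rintro ⟨A, rfl, h | h⟩
    · obtain ⟨B, hB, hs⟩ := A.exists_endSum_eq_of_intCast_eq h
      exact ⟨B, hB, .inl hs⟩
    · obtain ⟨B, hB, hs⟩ := A.exists_endSum_eq_of_intCast_eq (s := s - 1) (by push_cast; exact h)
      exact ⟨B, hB, .inr hs⟩
  · rintro ⟨A, rfl, h | h⟩
    · exact ⟨A, rfl, .inl (by rw [h])⟩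
    · exact ⟨A, rfl, .inr (by rw [h]; push_cast; rfl)⟩

lemma ArcPair.IsProper.toFinset_mem_checkboardFamily_iff {A : ArcPair n k} (hA : A.IsProper)
    {t : ZMod n} : A.toFinset ∈ checkboardFamily n k t ↔
      (A.endSum : ZMod n) = t ∨ (A.endSum : ZMod n) = t - 1 := by
  refine mem_checkboardFamily.trans ⟨?_, fun h ↦ ⟨A, rfl, h⟩⟩
  rintro ⟨B, hB, h⟩
  rwa [hA.intCast_endSum_eq hB.symm]

lemma checkboardFamily_injective (hn : 5 ≤ n) (hk : 2 ≤ k) (hkn : k + 2 ≤ n) :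
    Function.Injective (checkboardFamily n k) := by
  intro t t' htt'
  have eq_or_eq_sub_one_iff (u : ZMod n) : (u = t ∨ u = t - 1) ↔ (u = t' ∨ u = t' - 1) := by
    obtain ⟨s, rfl⟩ := ZMod.intCast_surjective u
    obtain ⟨A, hA, rfl⟩ := ArcPair.exists_isProper_endSum_eq hn hk hkn s
    rw [← hA.toFinset_mem_checkboardFamily_iff, htt', hA.toFinset_mem_checkboardFamily_iff]
  have two_ne_zero : (2 : ZMod n) ≠ 0 := by
    rw [← Nat.cast_ofNat, Ne, ZMod.natCast_eq_zero_iff]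
    exact Nat.not_dvd_of_pos_of_lt two_pos (by omega)
  obtain h | h := (eq_or_eq_sub_one_iff t).1 (.inl rfl)
  · exact h
  obtain h' | h' := (eq_or_eq_sub_one_iff t').2 (.inl rfl)
  · exact h'.symm
  · exact absurd (by linear_combination h + h') two_ne_zero

lemma addRight_smul_checkboardFamily (r t : ZMod n) :
    Equiv.addRight r • checkboardFamily n k t = checkboardFamily n k (t + 2 * r) := by
  have smul_subset (r t : ZMod n) :
      Equiv.addRight r • checkboardFamily n k t ⊆ checkboardFamily n k (t + 2 * r) := by
    intro J hJ
    obtain ⟨I, hI, rfl⟩ := mem_smul_finset.1 hJ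
    obtain ⟨A, rfl, hA⟩ := mem_checkboardFamily.1 hI
    obtain ⟨r, rfl⟩ := ZMod.intCast_surjective r
    refine mem_checkboardFamily.2 ⟨A.translate r, A.toFinset_translate r, ?_⟩
    rw [A.endSum_translate]
    push_cast
    exact hA.imp (by rintro rfl; rfl) (fun h ↦ by rw [h]; ring)
  refine (smul_subset r t).antisymm (subset_smul_finset_iff.2 ?_)
  simpa using smul_subset (-r) (t + 2 * r)

lemma subLeft_smul_checkboardFamily (r t : ZMod n) :
    Equiv.subLeft r • checkboardFamily n k t = checkboardFamily n k (k - 1 - t + 2 * r) := by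
  have smul_subset (t : ZMod n) :
      Equiv.subLeft r • checkboardFamily n k t ⊆ checkboardFamily n k (k - 1 - t + 2 * r) := by
    intro J hJ
    obtain ⟨I, hI, rfl⟩ := mem_smul_finset.1 hJ
    obtain ⟨A, rfl, hA⟩ := mem_checkboardFamily.1 hI
    obtain ⟨r, rfl⟩ := ZMod.intCast_surjective r
    refine mem_checkboardFamily.2 ⟨A.reflect r, A.toFinset_reflect r, ?_⟩
    rw [A.endSum_reflect]
    push_cast
    exact hA.symm.imp (fun h ↦ by rw [h]; ring) (fun h ↦ by rw [h]; ring)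
  have inv_subLeft : (Equiv.subLeft r)⁻¹ = Equiv.subLeft r := by
    ext x
    rw [Equiv.Perm.inv_eq_iff_eq]
    simp
  refine (smul_subset t).antisymm (subset_smul_finset_iff.2 ?_)
  rw [inv_subLeft]
  convert smul_subset (k - 1 - t + 2 * r) using 2
  ring

/-! ### The two checkboard collections -/

lemma Cch_eq_checkboardFamily_zero (hk : k ≤ n) : Cch k n = checkboardFamily n k 0 := by
  rw [show (0 : ZMod n) = ((n : ℤ) : ZMod n) by simp]
  ext I
  simp only [Cch, mem_checkboardFamily_intCast, mem_image, mem_product, mem_range, Prod.exists]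
  constructor
  · rintro ⟨i, j, ⟨hi, hj⟩, rfl⟩
    refine ⟨⟨_, _, _, _, by omega, by omega, by omega, by omega, by omega⟩,
      (Ich_eq_arc_union_arc hk (by omega) (by omega) rfl).symm, ?_⟩
    simp only [ArcPair.endSum]
    omega
  · rintro ⟨⟨a₁, b₁, a₂, b₂, h₁, h₂, h₃, h₄, hlen⟩, rfl, hsum⟩
    simp only [ArcPair.endSum] at hsum
    refine ⟨(n - k - (a₂ - b₁)).toNat, (b₁ - a₁).toNat, ⟨by omega, by omega⟩, ?_⟩
    simp only [ArcPair.toFinset]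
    rw [Ich_eq_arc_union_arc hk (by omega) (by omega) (c := n - b₂) (by omega)]
    congr 2 <;> omega

lemma CDch_eq_checkboardFamily (hk : k ≤ n) : CDch k n = checkboardFamily n k k := by
  rw [← Int.cast_natCast k]
  ext I
  simp only [CDch, mem_checkboardFamily_intCast, mem_image, mem_product, mem_range, Prod.exists]
  constructor
  · rintro ⟨i, j, ⟨hi, hj⟩, rfl⟩
    refine ⟨⟨_, _, _, _, by omega, by omega, by omega, by omega, by omega⟩,
      (Dch_eq_arc_union_arc (by omega) (by omega) rfl).symm, ?_⟩
    simp only [ArcPair.endSum]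
    omega
  · rintro ⟨⟨a₁, b₁, a₂, b₂, h₁, h₂, h₃, h₄, hlen⟩, rfl, hsum⟩
    simp only [ArcPair.endSum] at hsum
    refine ⟨(b₁ - a₁).toNat, (a₂ - b₁).toNat, ⟨by omega, by omega⟩, ?_⟩
    simp only [ArcPair.toFinset]
    rw [Dch_eq_arc_union_arc (by omega) (by omega) (c := -a₁) (by omega)]
    congr 2 <;> omega

end NeZero

/-! ### Dihedral orbits -/

lemma setOf_image_eq_orbit_dihedral (C : Finset (Finset (ZMod n))) :
    {X | ∃ ρ ∈ dihedral n, X = C.image (fun I ↦ I.image ρ)} = MulAction.orbit (dihedral n) C := by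
  ext X
  constructor
  · rintro ⟨ρ, hρ, rfl⟩
    exact ⟨⟨ρ, hρ⟩, rfl⟩
  · rintro ⟨⟨ρ, hρ⟩, rfl⟩
    exact ⟨ρ, hρ, rfl⟩

lemma subLeft_two_mem_dihedral : Equiv.subLeft (2 : ZMod n) ∈ dihedral n :=
  Subgroup.subset_closure (by simp)

variable [NeZero n]

lemma addRight_mem_dihedral (r : ZMod n) : Equiv.addRight r ∈ dihedral n := by
  have h : Equiv.addRight (1 : ZMod n) ^ r.val ∈ dihedral n :=
    pow_mem (Subgroup.subset_closure (by simp)) _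
  simpa using h

lemma dihedral_le_stabilizer_range_checkboardFamily :
    dihedral n ≤
      MulAction.stabilizer (Equiv.Perm (ZMod n)) (Set.range (checkboardFamily n k)) := by
  refine (Subgroup.closure_le _).2 ?_
  rintro _ (rfl | rfl) <;>
    refine (MulAction.mem_stabilizer_set' (Set.finite_range _)).2
      (Set.forall_mem_range.2 fun t ↦ ?_)
  · exact ⟨_, (addRight_smul_checkboardFamily 1 t).symm⟩
  · exact ⟨_, (subLeft_smul_checkboardFamily 2 t).symm⟩

lemma orbit_checkboardFamily_subset_range (t : ZMod n) :
    MulAction.orbit (dihedral n) (checkboardFamily n k t) ⊆ Set.range (checkboardFamily n k) := by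
  rintro _ ⟨⟨ρ, hρ⟩, rfl⟩
  have hstab := dihedral_le_stabilizer_range_checkboardFamily (k := k) hρ
  exact (MulAction.mem_stabilizer_set.1 hstab _).2 ⟨t, rfl⟩

lemma orbit_checkboardFamily_zero_union_orbit_checkboardFamily :
    MulAction.orbit (dihedral n) (checkboardFamily n k 0) ∪
      MulAction.orbit (dihedral n) (checkboardFamily n k k) = Set.range (checkboardFamily n k) := by
  refine (Set.union_subset (orbit_checkboardFamily_subset_range _)
    (orbit_checkboardFamily_subset_range _)).antisymm ?_
  rintro _ ⟨t, rfl⟩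
  obtain ⟨s, rfl⟩ := ZMod.intCast_surjective t
  obtain ⟨u, rfl | rfl⟩ := Int.even_or_odd' s
  · refine .inl ⟨⟨_, addRight_mem_dihedral u⟩, ?_⟩
    change Equiv.addRight (u : ZMod n) • checkboardFamily n k 0 = _
    rw [addRight_smul_checkboardFamily]
    push_cast
    rw [zero_add]
  · refine .inr ⟨⟨_, mul_mem (addRight_mem_dihedral ↑(u - 1)) subLeft_two_mem_dihedral⟩, ?_⟩
    change (Equiv.addRight ((u - 1 : ℤ) : ZMod n) * Equiv.subLeft 2) • checkboardFamily n k k = _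
    rw [mul_smul, subLeft_smul_checkboardFamily, addRight_smul_checkboardFamily]
    congr 1
    push_cast
    ring

end Checkboard

/-- the union of the `D_n`-orbits of the checkboard and dual checkboard
collections has exactly `n` elements. -/
theorem orbits_union_ncard
    (n k : ℕ) (hn : 5 ≤ n) (hk : 2 ≤ k) (hkn : k ≤ n - 2) :
    ({X : Finset (Finset (ZMod n)) | ∃ ρ ∈ dihedral n, X = (Cch k n).image (fun I => I.image ρ)} ∪
     {X : Finset (Finset (ZMod n)) | ∃ ρ ∈ dihedral n, X = (CDch k n).image (fun I => I.image ρ)}).ncard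
      = n := by
  have : NeZero n := ⟨by omega⟩
  have hkn' : k ≤ n := by omega
  rw [setOf_image_eq_orbit_dihedral, setOf_image_eq_orbit_dihedral,
    Cch_eq_checkboardFamily_zero hkn', CDch_eq_checkboardFamily hkn',
    orbit_checkboardFamily_zero_union_orbit_checkboardFamily,
    Set.ncard_range_of_injective (checkboardFamily_injective hn hk (by omega)), Nat.card_zmod]
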